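/- arXiv:2010.05560 — 3 statements merged into one kernel-verified Lean document; each statement's English description precedes it below -/
import Mathlib

section
/- Let A₁,…,A_N be n×n complex matrices. The following are equivalent: (1) for every polynomial p(t₁,…,t_N) in N non-commuting variables and every pair of indices r, s ∈ {1,…,N}, the matrix p(A₁,…,A_N)(A_r A_s − A_s A_r) is nilpotent; (2) there exists a unitary matrix U such that U* A_r U is upper triangular for every r = 1,…,N. -/
open Matrix

noncomputable section

/-!
Let the free algebra act on `ℂⁿ` through `A₁, …, A_N`. If the left multiples of a commutator `c` act
nilpotently, then `c` kills every composition factor `S` of `ℂⁿ`: were `c • v ≠ 0` for some `v ∈ S`,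
simplicity would give `p` with `p • c • v = v`, and `p * c` would not be nilpotent. So the
generators commute on `S`, and Schur's lemma makes `S` one-dimensional. A composition series is
therefore a complete flag of invariant subspaces, and an orthonormal basis adapted to it gives the
columns of `U`. Conversely, taking diagonals is multiplicative on upper triangular matrices, so a
multiple of a commutator of such matrices is upper triangular with zero diagonal.
-/

open Module

section CompositionFactors

variable {R V : Type*} [Ring R] [AddCommGroup V] [Module R V]

theorem mem_annihilator_of_forall_mul_pow_mem [IsSimpleModule R V] {c : R}
    (hc : ∀ p : R, ∃ k : ℕ, (p * c) ^ k ∈ annihilator R V) : c ∈ annihilator R V := by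
  refine mem_annihilator.mpr fun v => by_contra fun hcv => ?_
  obtain ⟨p, hp⟩ := IsSimpleModule.toSpanSingleton_surjective R hcv v
  obtain ⟨k, hk⟩ := hc p
  have hfix : Function.IsFixedPt ((p * c) • · : V → V) v := by
    simpa [Function.IsFixedPt, mul_smul] using hp
  have hv : v = 0 := by
    rw [← mem_annihilator.mp hk v, ← smul_iterate_apply]
    exact (hfix.iterate k).symm
  exact hcv (by rw [hv, smul_zero])

theorem annihilator_le_annihilator_subquotient (W W' : Submodule R V) :
    annihilator R V ≤ annihilator R (W' ⧸ W.submoduleOf W') :=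
  (LinearMap.annihilator_le_of_injective W'.subtype W'.injective_subtype).trans
    (LinearMap.annihilator_le_of_surjective _ (W.submoduleOf W').mkQ_surjective)

variable {K : Type*} [Field K] [Algebra K R] [Module K V] [IsScalarTower K R V]
  [FiniteDimensional K V]

theorem finrank_subquotient_add_finrank {W W' : Submodule R V} (h : W ≤ W') :
    finrank K (W' ⧸ W.submoduleOf W') + finrank K W = finrank K W' := by
  have : FiniteDimensional K W' :=
    FiniteDimensional.finiteDimensional_submodule (W'.restrictScalars K)
  rw [← ((Submodule.submoduleOfEquivOfLe h).restrictScalars K).finrank_eq,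
    ← (Submodule.Quotient.restrictScalarsEquiv K (W.submoduleOf W')).finrank_eq]
  exact ((W.submoduleOf W').restrictScalars K).finrank_quotient_add_finrank

variable [IsAlgClosed K] {s : Set R}

theorem finrank_eq_one_of_commutator_mem_annihilator [IsSimpleModule R V]
    (hs : Algebra.adjoin K s = ⊤)
    (hcomm : ∀ x ∈ s, ∀ y ∈ s, x * y - y * x ∈ annihilator R V) : finrank K V = 1 := by
  let ρ : R →ₐ[K] End K V := Algebra.lsmul K K V
  have hρ (x : R) : ρ x ∈ Algebra.adjoin K (ρ '' s) := by
    rw [← AlgHom.map_adjoin, hs]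
    exact ⟨x, trivial, rfl⟩
  have : IsMulCommutative (Algebra.adjoin K (ρ '' s)) := by
    refine Algebra.isMulCommutative_adjoin K ?_
    rintro _ ⟨x, hx, rfl⟩ _ ⟨y, hy, rfl⟩
    ext v
    simpa [ρ, sub_smul, mul_smul, sub_eq_zero] using mem_annihilator.mp (hcomm x hx y hy) v
  have : IsSimpleModule (Algebra.adjoin K (ρ '' s)) V := by
    refine isSimpleModule_iff_toSpanSingleton_surjective.mpr
      ⟨IsSimpleModule.nontrivial R V, fun v hv w => ?_⟩
    obtain ⟨x, hx⟩ := IsSimpleModule.toSpanSingleton_surjective R hv w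
    exact ⟨⟨ρ x, hρ x⟩, hx⟩
  exact IsSimpleModule.finrank_eq_one_of_isMulCommutative (Algebra.adjoin K (ρ '' s)) V K

theorem finrank_eq_finrank_add_one_of_covBy (hs : Algebra.adjoin K s = ⊤)
    (hnil : ∀ p : R, ∀ x ∈ s, ∀ y ∈ s, ∃ k : ℕ, (p * (x * y - y * x)) ^ k ∈ annihilator R V)
    {W W' : Submodule R V} (h : W ⋖ W') : finrank K W' = finrank K W + 1 := by
  have : IsSimpleModule R (W' ⧸ W.submoduleOf W') := (covBy_iff_quot_is_simple h.le).mp h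
  have : FiniteDimensional K W' :=
    FiniteDimensional.finiteDimensional_submodule (W'.restrictScalars K)
  have : FiniteDimensional K (W' ⧸ W.submoduleOf W') :=
    Module.Finite.of_surjective ((W.submoduleOf W').mkQ.restrictScalars K)
      (W.submoduleOf W').mkQ_surjective
  have hcomm : ∀ x ∈ s, ∀ y ∈ s, x * y - y * x ∈ annihilator R (W' ⧸ W.submoduleOf W') :=
    fun x hx y hy => mem_annihilator_of_forall_mul_pow_mem fun p =>
      (hnil p x hx y hy).imp fun _ hk => annihilator_le_annihilator_subquotient W W' hk
  rw [← finrank_subquotient_add_finrank h.le,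
    finrank_eq_one_of_commutator_mem_annihilator hs hcomm, add_comm]

theorem exists_compositionSeries_length_eq_finrank (hs : Algebra.adjoin K s = ⊤)
    (hnil : ∀ p : R, ∀ x ∈ s, ∀ y ∈ s, ∃ k : ℕ, (p * (x * y - y * x)) ^ k ∈ annihilator R V) :
    ∃ c : CompositionSeries (Submodule R V), c.length = finrank K V := by
  have : IsNoetherian R V := isNoetherian_of_tower K inferInstance
  have : IsArtinian R V := isArtinian_of_tower K inferInstance
  obtain ⟨c, hbot, htop⟩ := exists_compositionSeries_of_isNoetherian_isArtinian R V
  have hfinrank (i : Fin (c.length + 1)) : finrank K (c i) = i := by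
    induction i using Fin.induction with
    | zero => exact (congrArg (fun W : Submodule R V => finrank K W) hbot).trans (finrank_bot K V)
    | succ i ih =>
      rw [finrank_eq_finrank_add_one_of_covBy hs hnil (c.step i), ih, Fin.val_castSucc,
        Fin.val_succ]
  refine ⟨c, ?_⟩
  calc c.length = finrank K c.last := (hfinrank (Fin.last _)).symm
    _ = finrank K (⊤ : Submodule R V) := by rw [htop]
    _ = finrank K V := finrank_top K V

end CompositionFactors

section McCoyCondition

variable {ι R A B : Type*} [CommRing R] [Ring A] [Algebra R A] [Ring B] [Algebra R B]

variable (R) in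
/-- McCoy's criterion for simultaneous triangularizability of a family `a` in an `R`-algebra: every
left multiple of a commutator `a r * a s - a s * a r` by a noncommutative polynomial in `a` is
nilpotent. The polynomials are the elements of the free algebra on the index type. -/
def McCoyCondition (a : ι → A) : Prop :=
  ∀ (P : FreeAlgebra R ι) (r s : ι),
    IsNilpotent (FreeAlgebra.lift R a P * (a r * a s - a s * a r))

theorem McCoyCondition.comp_iff {a : ι → A} {φ : A →ₐ[R] B} (hφ : Function.Injective φ) :
    McCoyCondition R (φ ∘ a) ↔ McCoyCondition R a := by
  have hlift : FreeAlgebra.lift R (φ ∘ a) = φ.comp (FreeAlgebra.lift R a) :=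
    FreeAlgebra.hom_ext (by ext; simp)
  refine forall₃_congr fun P r s => ?_
  rw [← IsNilpotent.map_iff hφ]
  simp [hlift]

end McCoyCondition

section Flag

theorem McCoyCondition.exists_strictMono_invtSubmodule {ι K V : Type*} [Field K] [IsAlgClosed K]
    [AddCommGroup V] [Module K V] [FiniteDimensional K V] {f : ι → End K V}
    (hf : McCoyCondition K f) :
    ∃ W : Fin (finrank K V + 1) → Submodule K V,
      StrictMono W ∧ ∀ r i, W i ∈ (f r).invtSubmodule := by
  let : Module (FreeAlgebra K ι) V := Module.compHom V (FreeAlgebra.lift K f).toRingHom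
  have smul_def (P : FreeAlgebra K ι) (v : V) : P • v = FreeAlgebra.lift K f P v := rfl
  have : IsScalarTower K (FreeAlgebra K ι) V :=
    .of_algebraMap_smul fun c v => by
      rw [smul_def, AlgHom.commutes, algebraMap_end_apply]
  have hnil : ∀ P : FreeAlgebra K ι, ∀ x ∈ Set.range (FreeAlgebra.ι K),
      ∀ y ∈ Set.range (FreeAlgebra.ι K),
        ∃ k : ℕ, (P * (x * y - y * x)) ^ k ∈ annihilator (FreeAlgebra K ι) V := by
    rintro P _ ⟨r, rfl⟩ _ ⟨s, rfl⟩
    refine (hf P r s).imp fun k hk => mem_annihilator.mpr fun v => ?_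
    simp [smul_def, hk]
  obtain ⟨c, hc⟩ :=
    exists_compositionSeries_length_eq_finrank (V := V) (FreeAlgebra.adjoin_range_ι K ι) hnil
  rw [← hc]
  refine ⟨fun i => (c i).restrictScalars K, c.strictMono, fun r i v hv => ?_⟩
  simpa [smul_def] using (c i).smul_mem (FreeAlgebra.ι K r) hv

variable {𝕜 E : Type*} [RCLike 𝕜] [NormedAddCommGroup E] [InnerProductSpace 𝕜 E]

theorem exists_norm_eq_one_mem_orthogonal_of_lt {W W' : Submodule 𝕜 E} [W.HasOrthogonalProjection]
    (h : W < W') : ∃ v ∈ W', ‖v‖ = 1 ∧ v ∈ Wᗮ := by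
  have hne : Wᗮ ⊓ W' ≠ ⊥ := fun hbot => h.ne <| by
    simpa [hbot] using Submodule.sup_orthogonal_inf_of_hasOrthogonalProjection h.le
  obtain ⟨v, ⟨hvW, hvW'⟩, hv0⟩ := Submodule.exists_mem_ne_zero_of_ne_bot hne
  exact ⟨(‖v‖⁻¹ : 𝕜) • v, W'.smul_mem _ hvW', norm_smul_inv_norm hv0, Wᗮ.smul_mem _ hvW⟩

theorem exists_orthonormal_of_strictMono {n : ℕ} {W : Fin (n + 1) → Submodule 𝕜 E}
    [∀ i, (W i).HasOrthogonalProjection] (hW : StrictMono W) :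
    ∃ b : Fin n → E, Orthonormal 𝕜 b ∧ ∀ i, b i ∈ W i.succ ∧ b i ∈ (W i.castSucc)ᗮ := by
  choose b hmem hnorm horth using fun i : Fin n =>
    exists_norm_eq_one_mem_orthogonal_of_lt (hW i.castSucc_lt_succ)
  have hinner {i j : Fin n} (hij : i < j) : inner 𝕜 (b i) (b j) = 0 :=
    Submodule.inner_right_of_mem_orthogonal (hW.monotone hij (hmem i)) (horth j)
  refine ⟨b, ⟨hnorm, fun i j hij => ?_⟩, fun i => ⟨hmem i, horth i⟩⟩
  rcases hij.lt_or_gt with h | h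
  · exact hinner h
  · exact inner_eq_zero_symm.mp (hinner h)

theorem exists_orthonormalBasis_isUpperTriangular_of_strictMono {ι m : Type*}
    [FiniteDimensional 𝕜 E] [Fintype m] [LinearOrder m] (hm : finrank 𝕜 E = Fintype.card m)
    {f : ι → End 𝕜 E} {W : Fin (finrank 𝕜 E + 1) → Submodule 𝕜 E} (hW : StrictMono W)
    (hfW : ∀ r i, W i ∈ (f r).invtSubmodule) :
    ∃ b : OrthonormalBasis m 𝕜 E,
      ∀ r, (LinearMap.toMatrixOrthonormal b (f r)).IsUpperTriangular := by
  obtain ⟨v, hv, hvW⟩ := exists_orthonormal_of_strictMono hW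
  let e : Fin (finrank 𝕜 E) ≃o m := Fintype.orderIsoFinOfCardEq m hm.symm
  obtain ⟨b, hb⟩ := Orthonormal.exists_orthonormalBasis_extension_of_card_eq hm
    (v := v ∘ e.symm) (s := Set.univ) ((hv.comp _ e.symm.injective).comp _ Subtype.val_injective)
  refine ⟨b, fun r i j hij => ?_⟩
  rw [LinearMap.toMatrixOrthonormal_apply_apply, hb i trivial, hb j trivial]
  have hle : W (e.symm j).succ ≤ W (e.symm i).castSucc :=
    hW.monotone (Fin.succ_le_castSucc_iff.mpr (e.symm.lt_iff_lt.mpr hij))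
  exact Submodule.inner_left_of_mem_orthogonal (hle (hfW r _ (hvW _).1)) (hvW _).2

end Flag

section UpperTriangular

variable {m : Type*} [Fintype m]

theorem blockTriangular_lift_freeAlgebra {ι α R A : Type*} [CommRing R] [Ring A] [Algebra R A]
    [DecidableEq m] [LinearOrder α] {b : m → α} {T : ι → Matrix m m A}
    (hT : ∀ r, (T r).BlockTriangular b) (P : FreeAlgebra R ι) :
    (FreeAlgebra.lift R T P).BlockTriangular b := by
  have hle : Algebra.adjoin R (Set.range T) ≤ blockTriangularSubalgebra R A b :=
    Algebra.adjoin_le (Set.range_subset_iff.mpr hT)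
  rw [Algebra.adjoin_range_eq_range_freeAlgebra_lift] at hle
  exact hle ⟨P, rfl⟩

variable [LinearOrder m]

theorem diag_mul_of_isUpperTriangular {R : Type*} [NonUnitalNonAssocSemiring R] {M N : Matrix m m R}
    (hM : M.IsUpperTriangular) (hN : N.IsUpperTriangular) : (M * N).diag = M.diag * N.diag := by
  ext i
  rw [diag_apply, mul_apply]
  refine Finset.sum_eq_single i (fun j _ hj => ?_) (by simp)
  rcases hj.lt_or_gt with h | h
  · rw [hM h, zero_mul]
  · rw [hN h, mul_zero]

variable {R : Type*} [CommRing R]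

theorem isNilpotent_of_isUpperTriangular_of_diag_eq_zero {M : Matrix m m R}
    (hM : M.IsUpperTriangular) (hdiag : M.diag = 0) : IsNilpotent M := by
  have hcharpoly : M.charpoly = Polynomial.X ^ Fintype.card m := by
    simp [charpoly_of_isUpperTriangular M hM, ← diag_apply, hdiag]
  exact ⟨Fintype.card m, by simpa [hcharpoly] using aeval_self_charpoly M⟩

theorem McCoyCondition.of_isUpperTriangular {ι : Type*} {T : ι → Matrix m m R}
    (hT : ∀ r, (T r).IsUpperTriangular) : McCoyCondition R T := by
  intro P r s
  have hP : (FreeAlgebra.lift R T P).IsUpperTriangular := blockTriangular_lift_freeAlgebra hT P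
  have hC := ((hT r).mul (hT s)).sub ((hT s).mul (hT r))
  refine isNilpotent_of_isUpperTriangular_of_diag_eq_zero (hP.mul hC) ?_
  rw [diag_mul_of_isUpperTriangular hP hC, diag_sub, diag_mul_of_isUpperTriangular (hT r) (hT s),
    diag_mul_of_isUpperTriangular (hT s) (hT r), mul_comm (T s).diag, sub_self, mul_zero]

end UpperTriangular

theorem conjTranspose_toMatrix_basisFun_mul_mul {𝕜 m n : Type*} [RCLike 𝕜] [Fintype m]
    [DecidableEq m] [Fintype n] [DecidableEq n] (b : OrthonormalBasis n 𝕜 (EuclideanSpace 𝕜 m))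
    (M : Matrix m m 𝕜) :
    ((EuclideanSpace.basisFun m 𝕜).toBasis.toMatrix b)ᴴ * M *
      (EuclideanSpace.basisFun m 𝕜).toBasis.toMatrix b =
    LinearMap.toMatrixOrthonormal b (toLpLinAlgEquiv 2 M) := by
  ext i j
  rw [LinearMap.toMatrixOrthonormal_apply_apply, Matrix.mul_assoc, mul_apply]
  simp [PiLp.inner_apply, mul_comm, Basis.toMatrix_apply, mul_apply, mulVec, dotProduct,
    toLpLinAlgEquiv]

theorem stmt10_general {ι m : Type*} [Fintype m] [LinearOrder m] (A : ι → Matrix m m ℂ) :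
    (∀ P : FreeAlgebra ℂ ι, ∀ r s : ι,
        IsNilpotent (FreeAlgebra.lift ℂ A P * (A r * A s - A s * A r))) ↔
    (∃ U : Matrix m m ℂ, Uᴴ * U = 1 ∧ ∀ r, (Uᴴ * A r * U).BlockTriangular id) := by
  change McCoyCondition ℂ A ↔ _
  constructor
  · intro hA
    let e : Matrix m m ℂ ≃ₐ[ℂ] End ℂ (EuclideanSpace ℂ m) := toLpLinAlgEquiv 2
    have hf : McCoyCondition ℂ (e ∘ A) :=
      (McCoyCondition.comp_iff (φ := e.toAlgHom) e.injective).mpr hA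
    obtain ⟨W, hW, hfW⟩ := hf.exists_strictMono_invtSubmodule
    obtain ⟨b, hb⟩ :=
      exists_orthonormalBasis_isUpperTriangular_of_strictMono finrank_euclideanSpace hW hfW
    refine ⟨(EuclideanSpace.basisFun m ℂ).toBasis.toMatrix b,
      OrthonormalBasis.toMatrix_orthonormalBasis_conjTranspose_mul_self _ b, fun r => ?_⟩
    rw [conjTranspose_toMatrix_basisFun_mul_mul]
    exact hb r
  · rintro ⟨U, hU, hT⟩
    let u : unitary (Matrix m m ℂ) := ⟨U, hU, mul_eq_one_comm.mp hU⟩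
    let e := (Unitary.conjStarAlgAut ℂ (Matrix m m ℂ) (star u)).toAlgEquiv
    have hTe (r : ι) : (e (A r)).IsUpperTriangular := by
      simpa [e, u, star_eq_conjTranspose] using hT r
    exact (McCoyCondition.comp_iff (φ := e.toAlgHom) e.injective).mp (.of_isUpperTriangular hTe)

/-- **McCoy.** For `n × n` complex matrices `A₁,…,A_N`, the following are
equivalent: (1) for every polynomial `P` in `N` non-commuting variables and all indices `r, s`,
the matrix `P(A₁,…,A_N)(A_r A_s − A_s A_r)` is nilpotent; (2) there is a unitary `U` such that
`U* A_r U` is upper triangular for every `r`. -/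
theorem stmt10 {n N : ℕ} (A : Fin N → Matrix (Fin n) (Fin n) ℂ) :
    (∀ P : FreeAlgebra ℂ (Fin N), ∀ r s : Fin N,
        IsNilpotent (FreeAlgebra.lift ℂ A P * (A r * A s - A s * A r))) ↔
    (∃ U : Matrix (Fin n) (Fin n) ℂ, Uᴴ * U = 1 ∧
        ∀ r, (Uᴴ * A r * U).BlockTriangular id) :=
  stmt10_general A
end
end

section
/- Let A and B be n×n complex matrices, and let 𝒩 := ⋂_{k,l=1}^{n−1} ker([A^k, B^l]), where [A^k, B^l] = A^k B^l − B^l A^k. Then A and B have a common eigenvector (i.e. there exists a nonzero v ∈ ℂⁿ and scalars λ, μ ∈ ℂ with A v = λ v and B v = μ v) if and only if 𝒩 ≠ {0}; moreover, 𝒩 is invariant under both A and B, and AB x = BA x for every x ∈ 𝒩. -/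
/-!
All powers of an integral endomorphism are combinations of those below the degree of its minimal
polynomial. Hence if `f ^ k` and `g ^ l` commute at `x` for the exponents in the definition of the
Shemesh subspace, they commute at `x` for all `k` and `l`, and in this form the condition passes
from `x` to `f x` and `g x`. A nonzero Shemesh subspace thus contains an eigenvector of `f`, and
the eigenspace of `f` inside it is `g`-invariant because `f` and `g` commute there.
-/

open Matrix

noncomputable section

/-- The Shemesh subspace `𝒩 = ⋂_{k,l=1}^{n−1} ker([A^k, B^l])`. -/
def shemesh {n : ℕ} (A B : Matrix (Fin n) (Fin n) ℂ) : Submodule ℂ (Fin n → ℂ) :=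
  ⨅ k ∈ Finset.Icc 1 (n - 1), ⨅ l ∈ Finset.Icc 1 (n - 1),
    LinearMap.ker (A ^ k * B ^ l - B ^ l * A ^ k).mulVecLin

open Module

section CommRing

variable {R M : Type*} [CommRing R] [AddCommGroup M] [Module R M]

/-- The Shemesh subspace `⋂_{0 < k < p, 0 < l < q} ker [f ^ k, g ^ l]` of two endomorphisms. The
bounds `p` and `q` are free so that both the dimension and the degrees of the minimal polynomials
of `f` and `g` can be substituted for them. -/
def shemeshSubspace (f g : End R M) (p q : ℕ) : Submodule R M :=
  ⨅ k ∈ Finset.Ico 1 p, ⨅ l ∈ Finset.Ico 1 q, LinearMap.ker ⁅f ^ k, g ^ l⁆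

variable {f g : End R M} {p q : ℕ} {x : M}

theorem mem_shemeshSubspace_iff :
    x ∈ shemeshSubspace f g p q ↔ ∀ k ∈ Finset.Ico 1 p, ∀ l ∈ Finset.Ico 1 q,
      (f ^ k) ((g ^ l) x) = (g ^ l) ((f ^ k) x) := by
  simp only [shemeshSubspace, Submodule.mem_iInf, LinearMap.mem_ker, Ring.lie_def,
    LinearMap.sub_apply, End.mul_apply, sub_eq_zero]

theorem shemeshSubspace_comm (f g : End R M) (p q : ℕ) :
    shemeshSubspace f g p q = shemeshSubspace g f q p := by
  ext x
  simp only [mem_shemeshSubspace_iff]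
  exact ⟨fun h l hl k hk => (h k hk l hl).symm, fun h k hk l hl => (h l hl k hk).symm⟩

theorem mem_shemeshSubspace_of_hasEigenvector {a b : R} (hf : f.HasEigenvector a x)
    (hg : g.HasEigenvector b x) : x ∈ shemeshSubspace f g p q := by
  refine mem_shemeshSubspace_iff.2 fun k _ l _ => ?_
  rw [hg.pow_apply, map_smul, hf.pow_apply, map_smul, hg.pow_apply, smul_comm]

theorem pow_mem_span_pow_of_natDegree_minpoly_le {A : Type*} [Ring A] [Algebra R A] {a : A}
    (ha : IsIntegral R a) (hp : (minpoly R a).natDegree ≤ p) (k : ℕ) :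
    a ^ k ∈ Submodule.span R ((a ^ ·) '' Set.Iio p) := by
  classical
  have hk : a ^ k ∈ Subalgebra.toSubmodule (Algebra.adjoin R {a}) :=
    pow_mem (Algebra.self_mem_adjoin_singleton R a) k
  rw [← Submodule.span_range_natDegree_eq_adjoin (minpoly.monic ha) (minpoly.aeval R a),
    Finset.coe_image, Finset.coe_range] at hk
  exact Submodule.span_mono (Set.image_mono (Set.Iio_subset_Iio hp)) hk

theorem pow_apply_comm_of_forall_lt (hf : IsIntegral R f) (hp : (minpoly R f).natDegree ≤ p)
    (h : ∀ k ∈ Finset.Ico 1 p, (f ^ k) (g x) = g ((f ^ k) x)) (k : ℕ) :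
    (f ^ k) (g x) = g ((f ^ k) x) := by
  have hlt : Set.EqOn (LinearMap.applyₗ (g x)) (g ∘ₗ LinearMap.applyₗ x)
      ((f ^ ·) '' Set.Iio p) := by
    rintro _ ⟨j, hj, rfl⟩
    rcases Nat.eq_zero_or_pos j with rfl | hpos
    · simp
    · exact h j (Finset.mem_Ico.2 ⟨hpos, hj⟩)
  exact LinearMap.eqOn_span hlt (pow_mem_span_pow_of_natDegree_minpoly_le hf hp k)

theorem mem_shemeshSubspace_iff_forall_pow (hf : IsIntegral R f) (hg : IsIntegral R g)
    (hp : (minpoly R f).natDegree ≤ p) (hq : (minpoly R g).natDegree ≤ q) :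
    x ∈ shemeshSubspace f g p q ↔ ∀ k l : ℕ, (f ^ k) ((g ^ l) x) = (g ^ l) ((f ^ k) x) := by
  refine mem_shemeshSubspace_iff.trans ⟨fun h k l => ?_, fun h k _ l _ => h k l⟩
  refine pow_apply_comm_of_forall_lt hf hp (fun k hk => ?_) k
  exact (pow_apply_comm_of_forall_lt hg hq (fun l hl => (h k hk l hl).symm) l).symm

theorem apply_comm_of_mem_shemeshSubspace (hf : IsIntegral R f) (hg : IsIntegral R g)
    (hp : (minpoly R f).natDegree ≤ p) (hq : (minpoly R g).natDegree ≤ q)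
    (hx : x ∈ shemeshSubspace f g p q) : f (g x) = g (f x) := by
  simpa only [pow_one] using (mem_shemeshSubspace_iff_forall_pow hf hg hp hq).1 hx 1 1

theorem shemeshSubspace_mem_invtSubmodule_left (hf : IsIntegral R f) (hg : IsIntegral R g)
    (hp : (minpoly R f).natDegree ≤ p) (hq : (minpoly R g).natDegree ≤ q) :
    shemeshSubspace f g p q ∈ f.invtSubmodule := by
  intro x hx
  rw [Submodule.mem_comap, mem_shemeshSubspace_iff_forall_pow hf hg hp hq]
  rw [mem_shemeshSubspace_iff_forall_pow hf hg hp hq] at hx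
  intro k l
  calc (f ^ k) ((g ^ l) (f x))
      = (f ^ k) (f ((g ^ l) x)) := by rw [← pow_one f, ← hx 1 l, pow_one]
    _ = (f ^ (k + 1)) ((g ^ l) x) := by rw [pow_succ, End.mul_apply]
    _ = (g ^ l) ((f ^ (k + 1)) x) := hx (k + 1) l
    _ = (g ^ l) ((f ^ k) (f x)) := by rw [pow_succ, End.mul_apply]

theorem shemeshSubspace_mem_invtSubmodule_right (hf : IsIntegral R f) (hg : IsIntegral R g)
    (hp : (minpoly R f).natDegree ≤ p) (hq : (minpoly R g).natDegree ≤ q) :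
    shemeshSubspace f g p q ∈ g.invtSubmodule :=
  shemeshSubspace_comm f g p q ▸ shemeshSubspace_mem_invtSubmodule_left hg hf hq hp

end CommRing

section IsAlgClosed

variable {K V : Type*} [Field K] [IsAlgClosed K] [AddCommGroup V] [Module K V]
  [FiniteDimensional K V] {f g : End K V} {W : Submodule K V}

theorem exists_mem_hasEigenvector_of_mem_invtSubmodule (hW : W ≠ ⊥) (hf : W ∈ f.invtSubmodule) :
    ∃ v ∈ W, ∃ a, f.HasEigenvector a v := by
  have : Nontrivial W := Submodule.nontrivial_iff_ne_bot.2 hW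
  obtain ⟨a, ha⟩ := End.exists_eigenvalue (f.restrict hf)
  obtain ⟨v, hv⟩ := ha.exists_hasEigenvector
  exact ⟨v, v.2, a, End.hasEigenvector_iff.2 ⟨End.mem_eigenspace_iff.2
    (congrArg Subtype.val hv.apply_eq_smul), Subtype.coe_ne_coe.2 hv.2⟩⟩

theorem exists_mem_hasEigenvector_and_hasEigenvector (hW : W ≠ ⊥) (hf : W ∈ f.invtSubmodule)
    (hg : W ∈ g.invtSubmodule) (hfg : ∀ x ∈ W, f (g x) = g (f x)) :
    ∃ v ∈ W, ∃ a b, f.HasEigenvector a v ∧ g.HasEigenvector b v := by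
  obtain ⟨u, huW, a, hu⟩ := exists_mem_hasEigenvector_of_mem_invtSubmodule hW hf
  have hne : W ⊓ f.eigenspace a ≠ ⊥ := (Submodule.ne_bot_iff _).2 ⟨u, ⟨huW, hu.1⟩, hu.2⟩
  have hinv : W ⊓ f.eigenspace a ∈ g.invtSubmodule := by
    rintro x ⟨hxW, hxa⟩
    refine ⟨hg hxW, End.mem_eigenspace_iff.2 ?_⟩
    rw [hfg x hxW, End.mem_eigenspace_iff.1 hxa, map_smul]
  obtain ⟨v, ⟨hvW, hva⟩, b, hv⟩ := exists_mem_hasEigenvector_of_mem_invtSubmodule hne hinv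
  exact ⟨v, hvW, a, b, ⟨hva, hv.2⟩, hv⟩

theorem stmt12_general (f g : End K V) {p q : ℕ} (hp : (minpoly K f).natDegree ≤ p)
    (hq : (minpoly K g).natDegree ≤ q) :
    ((∃ v : V, v ≠ 0 ∧ ∃ a b : K, f v = a • v ∧ g v = b • v) ↔ shemeshSubspace f g p q ≠ ⊥) ∧
    (∀ x ∈ shemeshSubspace f g p q,
      f x ∈ shemeshSubspace f g p q ∧ g x ∈ shemeshSubspace f g p q) ∧
    (∀ x ∈ shemeshSubspace f g p q, f (g x) = g (f x)) := by
  have hf : IsIntegral K f := Algebra.IsIntegral.isIntegral f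
  have hg : IsIntegral K g := Algebra.IsIntegral.isIntegral g
  have hinvf := shemeshSubspace_mem_invtSubmodule_left hf hg hp hq
  have hinvg := shemeshSubspace_mem_invtSubmodule_right hf hg hp hq
  have hcomm : ∀ x ∈ shemeshSubspace f g p q, f (g x) = g (f x) := fun _ hx =>
    apply_comm_of_mem_shemeshSubspace hf hg hp hq hx
  refine ⟨⟨?_, fun hne => ?_⟩, fun x hx => ⟨hinvf hx, hinvg hx⟩, hcomm⟩
  · rintro ⟨v, hv, a, b, hfv, hgv⟩
    exact (Submodule.ne_bot_iff _).2 ⟨v, mem_shemeshSubspace_of_hasEigenvector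
      ⟨End.mem_eigenspace_iff.2 hfv, hv⟩ ⟨End.mem_eigenspace_iff.2 hgv, hv⟩, hv⟩
  · obtain ⟨v, -, a, b, hfv, hgv⟩ :=
      exists_mem_hasEigenvector_and_hasEigenvector hne hinvf hinvg hcomm
    exact ⟨v, hfv.2, a, b, hfv.apply_eq_smul, hgv.apply_eq_smul⟩

end IsAlgClosed

theorem natDegree_minpoly_toLin'_le {K ι : Type*} [Field K] [Fintype ι] [DecidableEq ι]
    (A : Matrix ι ι K) : (minpoly K (toLin' A)).natDegree ≤ Fintype.card ι := by
  rw [minpoly_toLin', ← A.charpoly_natDegree_eq_dim]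
  exact Polynomial.natDegree_le_of_dvd A.minpoly_dvd_charpoly A.charpoly_monic.ne_zero

theorem shemesh_eq_shemeshSubspace {n : ℕ} (A B : Matrix (Fin n) (Fin n) ℂ) :
    shemesh A B = shemeshSubspace (toLin' A) (toLin' B) n n := by
  have hlie (k l : ℕ) :
      ⁅toLin' A ^ k, toLin' B ^ l⁆ = (A ^ k * B ^ l - B ^ l * A ^ k).mulVecLin := by
    rw [← toLin'_apply', map_sub, toLin'_mul, toLin'_mul, toLin'_pow, toLin'_pow]
    rfl
  have hIcc : Finset.Icc 1 (n - 1) = Finset.Ico 1 n := by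
    ext k
    simp only [Finset.mem_Icc, Finset.mem_Ico]
    lia
  simp only [shemesh, shemeshSubspace, hlie, hIcc]

/-- **Shemesh.** `A` and `B` have a common eigenvector iff `𝒩 ≠ {0}`; moreover
`𝒩` is invariant under `A` and `B`, and `A` and `B` commute on `𝒩`. -/
theorem stmt12 {n : ℕ} (A B : Matrix (Fin n) (Fin n) ℂ) :
    ((∃ v : Fin n → ℂ, v ≠ 0 ∧ ∃ lam mu : ℂ, A.mulVec v = lam • v ∧ B.mulVec v = mu • v) ↔
      shemesh A B ≠ ⊥) ∧
    (∀ x ∈ shemesh A B, A.mulVec x ∈ shemesh A B ∧ B.mulVec x ∈ shemesh A B) ∧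
    (∀ x ∈ shemesh A B, (A * B).mulVec x = (B * A).mulVec x) := by
  simpa [shemesh_eq_shemeshSubspace] using stmt12_general (toLin' A) (toLin' B)
    (natDegree_minpoly_toLin'_le A) (natDegree_minpoly_toLin'_le B)
end
end

section
/- Let A and B be n×n complex matrices such that the commutator AB − BA has rank 1 (a Laffey pair). Then A and B partially commute but do not commute: there exists a nonzero vector v ∈ ℂⁿ and scalars λ, μ ∈ ℂ with A v = λ v and B v = μ v, while AB ≠ BA. -/
open Matrix

noncomputable section

/-!
Let `a` be an eigenvalue of `f` and put `p = f - a`, so that `⁅p, g⁆ = ⁅f, g⁆`. If `ker p` is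
invariant under `g`, an eigenvector of `g` in `ker p` is a common eigenvector. Otherwise there is
`x ∈ ker p` with `⁅p, g⁆ x = p (g x) ≠ 0`; as `⁅p, g⁆` has rank at most one, this vector spans its
range, which therefore lies in `range p`. Then `range p` is a nonzero proper subspace invariant
under `f` and `g`, and one concludes by induction on the dimension.
-/

open Module Module.End

section DivisionRing

universe u

variable {K V : Type*} {V' : Type u} [DivisionRing K] [AddCommGroup V] [Module K V]
  [AddCommGroup V'] [Module K V']

theorem range_le_of_rank_le_one_of_apply_mem {f : V →ₗ[K] V'} (hf : LinearMap.rank f ≤ 1)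
    {W : Submodule K V'} {x : V} (hx : f x ≠ 0) (hxW : f x ∈ W) : f.range ≤ W := by
  obtain ⟨u, hu⟩ := (rank_submodule_le_one_iff' f.range).1 hf
  obtain ⟨c, hc⟩ := Submodule.mem_span_singleton.1 (hu (f.mem_range_self x))
  have hc0 : c ≠ 0 := fun h0 ↦ hx (by rw [← hc, h0, zero_smul])
  have huW : u ∈ W := (W.smul_mem_iff hc0).1 (hc ▸ hxW)
  exact hu.trans ((Submodule.span_singleton_le_iff_mem u W).2 huW)

theorem rank_restrict_le (f : V →ₗ[K] V') {W : Submodule K V} {W' : Submodule K V'}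
    (hf : ∀ x ∈ W, f x ∈ W') : LinearMap.rank (f.restrict hf) ≤ LinearMap.rank f :=
  calc
    LinearMap.rank (f.restrict hf) = LinearMap.rank (W'.subtype ∘ₗ f.restrict hf) := by
      rw [LinearMap.rank, LinearMap.rank, LinearMap.range_comp]
      exact (Submodule.equivMapOfInjective _ W'.injective_subtype _).rank_eq
    _ = LinearMap.rank (f ∘ₗ W.subtype) := rfl
    _ ≤ LinearMap.rank f := LinearMap.rank_comp_le_left _ _

theorem rank_lie_restrict_le {f g : End K V} {W : Submodule K V}
    (hf : W ∈ f.invtSubmodule) (hg : W ∈ g.invtSubmodule) :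
    LinearMap.rank ⁅f.restrict hf, g.restrict hg⁆ ≤ LinearMap.rank ⁅f, g⁆ :=
  rank_restrict_le ⁅f, g⁆ fun _ hx ↦ W.sub_mem (hf (hg hx)) (hg (hf hx))

theorem range_mem_invtSubmodule_of_ker_notMem {p g : End K V} (h : LinearMap.rank ⁅p, g⁆ ≤ 1)
    (hker : p.ker ∉ g.invtSubmodule) : p.range ∈ g.invtSubmodule := by
  obtain ⟨x, hpx, hpgx⟩ : ∃ x, p x = 0 ∧ p (g x) ≠ 0 := by
    simpa [mem_invtSubmodule_iff_forall_mem_of_mem] using hker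
  have lie_apply_x : ⁅p, g⁆ x = p (g x) := by simp [Ring.lie_def, hpx]
  have range_lie_le : LinearMap.range ⁅p, g⁆ ≤ p.range :=
    range_le_of_rank_le_one_of_apply_mem h (x := x) (by rwa [lie_apply_x])
      (lie_apply_x ▸ p.mem_range_self (g x))
  rintro _ ⟨y, rfl⟩
  have apply_eq : g (p y) = p (g y) - ⁅p, g⁆ y := by simp [Ring.lie_def]
  rw [Submodule.mem_comap, apply_eq]
  exact p.range.sub_mem (p.mem_range_self _) (range_lie_le (LinearMap.mem_range_self _ y))

end DivisionRing

section PartiallyCommute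

variable {R M : Type*} [CommRing R] [AddCommGroup M] [Module R M]

/-- Two endomorphisms partially commute if they have a common eigenvector, possibly for different
eigenvalues. -/
def PartiallyCommute (f g : End R M) : Prop :=
  ∃ v a b, f.HasEigenvector a v ∧ g.HasEigenvector b v

theorem hasEigenvector_of_restrict {f : End R M} {W : Submodule R M} (hf : W ∈ f.invtSubmodule)
    {a : R} {v : W} (hv : HasEigenvector (f.restrict hf) a v) : f.HasEigenvector a v :=
  ⟨eigenspace_restrict_le_eigenspace f hf a (Submodule.mem_map_of_mem hv.1),
    by simpa using hv.2⟩

theorem PartiallyCommute.of_restrict {f g : End R M} {W : Submodule R M}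
    (hf : W ∈ f.invtSubmodule) (hg : W ∈ g.invtSubmodule)
    (h : PartiallyCommute (f.restrict hf) (g.restrict hg)) : PartiallyCommute f g :=
  let ⟨v, a, b, hfv, hgv⟩ := h
  ⟨v, a, b, hasEigenvector_of_restrict hf hfv, hasEigenvector_of_restrict hg hgv⟩

end PartiallyCommute

section IsAlgClosed

variable {K V : Type*} [Field K] [IsAlgClosed K] [AddCommGroup V] [Module K V]

theorem exists_hasEigenvector_mem {g : End K V} {W : Submodule K V} [FiniteDimensional K W]
    (hg : W ∈ g.invtSubmodule) (hW : W ≠ ⊥) : ∃ v ∈ W, ∃ b, g.HasEigenvector b v := by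
  have : Nontrivial W := Submodule.nontrivial_iff_ne_bot.2 hW
  obtain ⟨b, hb⟩ := exists_eigenvalue (g.restrict hg)
  obtain ⟨v, hv⟩ := hb.exists_hasEigenvector
  exact ⟨v, v.2, b, hasEigenvector_of_restrict hg hv⟩

theorem partiallyCommute_of_eigenspace_mem_invtSubmodule {f g : End K V} {a : K}
    [FiniteDimensional K (f.eigenspace a)] (ha : f.HasEigenvalue a)
    (hg : f.eigenspace a ∈ g.invtSubmodule) :
    PartiallyCommute f g := by
  obtain ⟨v, hv, b, hgv⟩ := exists_hasEigenvector_mem hg ha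
  exact ⟨v, a, b, ⟨hv, hgv.2⟩, hgv⟩

theorem partiallyCommute_of_rank_lie_le_one [FiniteDimensional K V] [Nontrivial V] {f g : End K V}
    (h : LinearMap.rank ⁅f, g⁆ ≤ 1) : PartiallyCommute f g := by
  induction hd : finrank K V using Nat.strong_induction_on generalizing V with
  | _ d ih =>
  obtain ⟨a, ha⟩ := exists_eigenvalue f
  by_cases hker : f.eigenspace a ∈ g.invtSubmodule
  · exact partiallyCommute_of_eigenspace_mem_invtSubmodule ha hker
  rw [eigenspace_def] at hker
  set p := f - a • 1 with hp
  have lie_eq : ⁅p, g⁆ = ⁅f, g⁆ := by simp [hp, Ring.lie_def, sub_mul, mul_sub]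
  have hWf : p.range ∈ f.invtSubmodule := by
    rintro _ ⟨y, rfl⟩
    exact ⟨f y, by simp [hp]⟩
  have hWg : p.range ∈ g.invtSubmodule := range_mem_invtSubmodule_of_ker_notMem (lie_eq ▸ h) hker
  have : Nontrivial p.range := by
    refine Submodule.nontrivial_iff_ne_bot.2 fun hbot ↦ hker ?_
    rw [LinearMap.range_eq_bot.1 hbot, LinearMap.ker_zero]
    exact invtSubmodule.top_mem g
  have range_ne_top : p.range ≠ ⊤ := fun htop ↦
    ha <| eigenspace_def.trans (LinearMap.ker_eq_bot_iff_range_eq_top.2 htop)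
  exact .of_restrict hWf hWg <|
    ih _ (hd ▸ Submodule.finrank_lt range_ne_top) ((rank_lie_restrict_le hWf hWg).trans h) rfl

end IsAlgClosed

theorem lie_mulVecLin {R ι : Type*} [CommRing R] [Fintype ι] (A B : Matrix ι ι R) :
    ⁅A.mulVecLin, B.mulVecLin⁆ = (A * B - B * A).mulVecLin := by
  ext x
  simp [Ring.lie_def]

theorem stmt13_general {K ι : Type*} [Field K] [IsAlgClosed K] [Fintype ι] (A B : Matrix ι ι K)
    (hLaffey : (A * B - B * A).rank = 1) :
    (∃ v : ι → K, v ≠ 0 ∧ ∃ lam mu : K, A.mulVec v = lam • v ∧ B.mulVec v = mu • v) ∧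
    A * B ≠ B * A := by
  have not_comm : A * B ≠ B * A := fun hAB ↦ by simp [hAB] at hLaffey
  have : Nonempty ι := not_isEmpty_iff.1 fun _ ↦ not_comm (Subsingleton.elim _ _)
  have rank_lie_eq_one : LinearMap.rank ⁅A.mulVecLin, B.mulVecLin⁆ = 1 := by
    rw [lie_mulVecLin]
    exact rank_eq_one_iff_finrank_eq_one.2 hLaffey
  obtain ⟨v, a, b, hA, hB⟩ := partiallyCommute_of_rank_lie_le_one rank_lie_eq_one.le
  exact ⟨⟨v, hA.2, a, b, hA.apply_eq_smul, hB.apply_eq_smul⟩, not_comm⟩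

/-- A Laffey pair (the commutator `AB − BA` has rank `1`) partially commutes
but does not commute: there is a common eigenvector, while `AB ≠ BA`. -/
theorem stmt13 {n : ℕ} (A B : Matrix (Fin n) (Fin n) ℂ)
    (hLaffey : (A * B - B * A).rank = 1) :
    (∃ v : Fin n → ℂ, v ≠ 0 ∧ ∃ lam mu : ℂ, A.mulVec v = lam • v ∧ B.mulVec v = mu • v) ∧
    A * B ≠ B * A :=
  stmt13_general A B hLaffey
end
end
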